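/- arXiv:2402.12313 — 4 statements merged into one kernel-verified Lean document; each statement's English description precedes it below -/
import Mathlib

section
/- Let G be an X-generated group and let F be an F-inverse monoid equipped with a map ι_F : X → F such that F is generated by ι_F(X) in the enriched signature (the smallest subset of F containing ι_F(X) and 1 and closed under multiplication, inversion and the operation m is all of F). Assume that whenever two words u, v over X ∪ X⁻¹ satisfy [u]_G = [v]_G, the values [u]_F and [v]_F are σ-related in F. Then there exists a monoid homomorphism φ : M^∧(G,Y) → F such that φ((A,g)⁻¹) = φ(A,g)⁻¹ for all (A,g), φ((Γ_ḡ^∧, g)) = m(φ(A,g)) for every (A,g) ∈ M^∧(G,Y), φ((Γ_x^∧, [x]_G)) = ι_F(x) for all x ∈ X, and for every (A,g) ∈ M^∧(G,Y) and every word w over X ∪ X⁻¹ with [w]_G = g, φ(A,g) is σ-related to [w]_F. -/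
/-!
Choose for each `g : G` the maximum `ψ g` of the `σ`-class of the values `[w]_F`, `[w]_G = g`.
Then `ψ` is a premorphism: `ψ 1 = 1`, `ψ g⁻¹ = (ψ g)⁻¹` and `ψ g * ψ h ≤ ψ (g * h)`. Attach to a
vertex `a` the idempotent `ψ a * (ψ a)⁻¹`, to an edge `(a, x)` the idempotent
`ψ a * ιF x * (ιF x)⁻¹ * (ψ a)⁻¹`, and to a graph `A` the meet `e A` of the idempotents of its
vertices and of its edges labelled in `X`. Then `φ (A, g) = e A * ψ g` works. Closing a graph only
adds edges labelled in `Ḡ`, so `e` does not see it, and multiplicativity comes down to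
`ψ g * e A = e (gA) * ψ g` and `e A * ψ g * ψ h = e A * ψ (g * h)` for a vertex `g` of `A`.
-/

namespace FInvPaper

/-- The extended alphabet `Y = X ⊔ Ḡ`, with `Ḡ` a bijective copy of `G`. -/
abbrev YT (X G : Type*) := X ⊕ G

/-- The extension `ι_Y : Y → G` of the assignment map `ι : X → G`. -/
def iotaY {X G : Type*} (ι : X → G) : YT X G → G := Sum.elim ι id

/-- A (candidate) subgraph of `Cay(G,Y)`: a set of vertices together with a set
of positive edges, an edge `(a, y)` joining `a` to `a * ι_Y y`. -/
abbrev Graph (X G : Type*) := Set G × Set (G × YT X G)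

variable {X G : Type*} [Group G]

/-- `Γ` is a finite subgraph of `Cay(G,Y)` containing the origin. -/
def IsSubgraph (ι : X → G) (Γ : Graph X G) : Prop :=
  Γ.1.Finite ∧ Γ.2.Finite ∧ (1 : G) ∈ Γ.1 ∧
    ∀ e ∈ Γ.2, e.1 ∈ Γ.1 ∧ e.1 * iotaY ι e.2 ∈ Γ.1

/-- The relation on vertices given by the positive edges of `Γ`. -/
def edgeRel (ι : X → G) (Γ : Graph X G) (a b : G) : Prop :=
  ∃ y : YT X G, (a, y) ∈ Γ.2 ∧ b = a * iotaY ι y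

/-- `Γ` is connected: every vertex is related to the origin `1` by the
equivalence relation generated by the edge relation. -/
def IsConn (ι : X → G) (Γ : Graph X G) : Prop :=
  ∀ v ∈ Γ.1, Relation.EqvGen (edgeRel ι Γ) 1 v

/-- `𝒳_Y`: all finite connected subgraphs of `Cay(G,Y)` containing the origin. -/
def XY (ι : X → G) : Set (Graph X G) :=
  {Γ | IsSubgraph ι Γ ∧ IsConn ι Γ}

/-- The translate `gΓ`. -/
def gmul (g : G) (Γ : Graph X G) : Graph X G :=
  ((g * ·) '' Γ.1, (fun e => (g * e.1, e.2)) '' Γ.2)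

/-- Componentwise union of graphs. -/
def gunion (Γ Δ : Graph X G) : Graph X G := (Γ.1 ∪ Δ.1, Γ.2 ∪ Δ.2)

/-- Componentwise inclusion of graphs. -/
def gsub (Γ Δ : Graph X G) : Prop := Γ.1 ⊆ Δ.1 ∧ Γ.2 ⊆ Δ.2

/-- The closure `Γ^∧` of `Γ`: add the edge `(a, \overline{a⁻¹b})` for all
vertices `a, b` of `Γ`. -/
def clo (Γ : Graph X G) : Graph X G :=
  (Γ.1, Γ.2 ∪ {e : G × YT X G | ∃ a ∈ Γ.1, ∃ b ∈ Γ.1, e = (a, Sum.inr (a⁻¹ * b))})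

/-- `Γ` is closed. -/
def IsClosedGr (Γ : Graph X G) : Prop :=
  ∀ a ∈ Γ.1, ∀ b ∈ Γ.1, (a, (Sum.inr (a⁻¹ * b) : YT X G)) ∈ Γ.2

/-- `𝒳_Y^∧`: all closed graphs in `𝒳_Y`. -/
def XYw (ι : X → G) : Set (Graph X G) := {Γ | Γ ∈ XY ι ∧ IsClosedGr Γ}

/-- The graph `Γ_1` with single vertex `1` and no edges. -/
def gammaOne : Graph X G := ({1}, ∅)

/-- The graph `Γ_x` for `x ∈ X`. -/
def gammaX (ι : X → G) (x : X) : Graph X G :=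
  ({1, ι x}, {((1 : G), (Sum.inl x : YT X G))})

/-- The graph `Γ_ḡ` for `g ∈ G`. -/
def gammaBar (g : G) : Graph X G :=
  ({1, g}, {((1 : G), (Sum.inr g : YT X G))})

/-- Raw elements: pairs `(Γ, g)`. -/
abbrev Elt (X G : Type*) := Graph X G × G

/-- The carrier of `M(G,Y)`. -/
def Mset (ι : X → G) : Set (Elt X G) := {p | p.1 ∈ XY ι ∧ p.2 ∈ p.1.1}

/-- Multiplication of `M(G,Y)`: `(A,g)(B,h) = (A ∪ gB, gh)`. -/
def mulM (p q : Elt X G) : Elt X G := (gunion p.1 (gmul p.2 q.1), p.2 * q.2)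

/-- Inversion: `(A,g)⁻¹ = (g⁻¹A, g⁻¹)`. -/
def invM (p : Elt X G) : Elt X G := (gmul p.2⁻¹ p.1, p.2⁻¹)

/-- The carrier of `M^∧(G,Y)`. -/
def Mwedge (ι : X → G) : Set (Elt X G) := {p | p.1 ∈ XYw ι ∧ p.2 ∈ p.1.1}

/-- Multiplication of `M^∧(G,Y)`: `(A,g)(B,h) = ((A ∪ gB)^∧, gh)`. -/
def mulW (p q : Elt X G) : Elt X G := (clo (gunion p.1 (gmul p.2 q.1)), p.2 * q.2)

/-- Natural partial order of `M^∧(G,Y)`: `s ≤ t` iff `s = s s⁻¹ t`. -/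
def nleW (p q : Elt X G) : Prop := p = mulW (mulW p (invM p)) q

/-- Minimum group congruence `σ` of `M^∧(G,Y)`. -/
def sigmaW (ι : X → G) (p q : Elt X G) : Prop :=
  ∃ u ∈ Mwedge ι, nleW u p ∧ nleW u q

/-- The `m`-operation of `M^∧(G,Y)`: `m(A, g) = (Γ_ḡ^∧, g)`. -/
def mW (p : Elt X G) : Elt X G := (clo (gammaBar p.2), p.2)

/-- Natural partial order of `M(G,Y)`. -/
def nleM (p q : Elt X G) : Prop := p = mulM (mulM p (invM p)) q

/-- Minimum group congruence `σ` of `M(G,Y)`. -/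
def sigmaM (ι : X → G) (p q : Elt X G) : Prop :=
  ∃ u ∈ Mset ι, nleM u p ∧ nleM u q

end FInvPaper
namespace FInvPaper

/-- An inverse monoid: a monoid with an involutive inversion such that
`s s⁻¹ s = s`, `(st)⁻¹ = t⁻¹ s⁻¹`, and idempotents commute. -/
class InverseMonoid (S : Type*) extends Monoid S, Inv S where
  mul_inv_mul : ∀ s : S, s * s⁻¹ * s = s
  inv_inv : ∀ s : S, s⁻¹⁻¹ = s
  mul_inv_rev : ∀ s t : S, (s * t)⁻¹ = t⁻¹ * s⁻¹
  idem_comm : ∀ e f : S, e * e = e → f * f = f → e * f = f * e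

/-- The natural partial order of an inverse monoid: `s ≤ t` iff `s = s s⁻¹ t`. -/
def nle {S : Type*} [InverseMonoid S] (s t : S) : Prop := s = s * s⁻¹ * t

/-- The minimum group congruence `σ`: `s σ t` iff some `u` lies below both. -/
def sigmaRel {S : Type*} [InverseMonoid S] (s t : S) : Prop :=
  ∃ u : S, nle u s ∧ nle u t

/-- Words over `X ∪ X⁻¹`: lists of signed letters (`true` = positive letter). -/
abbrev Word (X : Type*) := List (X × Bool)

/-- The value of a word under `x ↦ f x`, `x⁻¹ ↦ inv (f x)`;
the empty word has value `1`. -/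
def evalWord {X M : Type*} [One M] [Mul M] (f : X → M) (inv : M → M) : Word X → M
  | [] => 1
  | (x, b) :: w => (if b then f x else inv (f x)) * evalWord f inv w

end FInvPaper

namespace FInvPaper

section FiniteMeet

variable {α : Type*} [SemilatticeInf α] [OrderTop α]

open Classical in
/-- The meet of a finite set. The junk value on infinite sets is `⊤`. -/
noncomputable def finiteMeet (T : Set α) : α := if h : T.Finite then h.toFinset.inf id else ⊤

theorem isGLB_finiteMeet {T : Set α} (hT : T.Finite) : IsGLB T (finiteMeet T) := by
  rw [finiteMeet, dif_pos hT]
  simpa using hT.toFinset.isGLB_inf_id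

theorem finiteMeet_empty : finiteMeet (∅ : Set α) = ⊤ :=
  (isGLB_finiteMeet Set.finite_empty).unique isGLB_empty

theorem finiteMeet_insert (a : α) {T : Set α} (hT : T.Finite) :
    finiteMeet (insert a T) = a ⊓ finiteMeet T :=
  (isGLB_finiteMeet (hT.insert a)).unique ((isGLB_finiteMeet hT).insert a)

theorem finiteMeet_singleton (a : α) : finiteMeet {a} = a :=
  (isGLB_finiteMeet (Set.finite_singleton a)).unique isGLB_singleton

theorem finiteMeet_union {T U : Set α} (hT : T.Finite) (hU : U.Finite) :
    finiteMeet (T ∪ U) = finiteMeet T ⊓ finiteMeet U :=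
  (isGLB_finiteMeet (hT.union hU)).unique ((isGLB_finiteMeet hT).union (isGLB_finiteMeet hU))

end FiniteMeet

section InverseMonoid

variable {S : Type*} [InverseMonoid S]

theorem commute_of_isIdempotentElem {e f : S} (he : IsIdempotentElem e)
    (hf : IsIdempotentElem f) : Commute e f :=
  InverseMonoid.idem_comm e f he hf

theorem isIdempotentElem_mul_inv (s : S) : IsIdempotentElem (s * s⁻¹) := by
  rw [IsIdempotentElem, ← mul_assoc, InverseMonoid.mul_inv_mul]

theorem isIdempotentElem_inv_mul (s : S) : IsIdempotentElem (s⁻¹ * s) := by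
  rw [IsIdempotentElem, mul_assoc, ← mul_assoc s, InverseMonoid.mul_inv_mul]

theorem inv_eq_of_mul_eq_one {s t : S} (h : s * t = 1) : s⁻¹ = t := by
  have one_inv : (1 : S)⁻¹ = 1 := by simpa using InverseMonoid.mul_inv_mul (1 : S)
  have h_inv : t⁻¹ * s⁻¹ = 1 := by rw [← InverseMonoid.mul_inv_rev, h, one_inv]
  have hst : s⁻¹ * s * t = s⁻¹ := by rw [mul_assoc, h, mul_one]
  symm
  calc t = t * t⁻¹ * s⁻¹ := by rw [mul_assoc, h_inv, mul_one]
    _ = t * t⁻¹ * (s⁻¹ * s) * t := by rw [mul_assoc (t * t⁻¹), hst]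
    _ = s⁻¹ * s * (t * t⁻¹) * t := by
      rw [(commute_of_isIdempotentElem (isIdempotentElem_mul_inv t)
        (isIdempotentElem_inv_mul s)).eq]
    _ = s⁻¹ := by rw [mul_assoc, InverseMonoid.mul_inv_mul, hst]

/-- An inverse monoid is a division monoid. This is only a local instance, since as a global one
it would change how `1` and `*` elaborate in an inverse monoid. -/
abbrev InverseMonoid.toDivisionMonoid : DivisionMonoid S where
  inv_inv := InverseMonoid.inv_inv
  mul_inv_rev := InverseMonoid.mul_inv_rev
  inv_eq_of_mul _ _ := inv_eq_of_mul_eq_one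

attribute [local instance] InverseMonoid.toDivisionMonoid

theorem inv_eq_self_of_isIdempotentElem {e : S} (he : IsIdempotentElem e) : e⁻¹ = e :=
  calc e⁻¹ = e⁻¹ * (e * e) * e⁻¹ := by
        rw [he.eq]; simpa using (InverseMonoid.mul_inv_mul e⁻¹).symm
    _ = e⁻¹ * e * (e * e⁻¹) := by simp only [mul_assoc]
    _ = e * e⁻¹ * (e⁻¹ * e) := commute_of_isIdempotentElem (isIdempotentElem_inv_mul e)
        (isIdempotentElem_mul_inv e)
    _ = e * (e * e)⁻¹ * e := by simp only [mul_inv_rev, mul_assoc]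
    _ = e := by rw [he.eq, InverseMonoid.mul_inv_mul]

theorem semiconjBy_mul_mul_inv (s : S) {e : S} (he : IsIdempotentElem e) :
    SemiconjBy s e (s * e * s⁻¹) :=
  calc s * e = s * (s⁻¹ * s * e) := by simp only [← mul_assoc, InverseMonoid.mul_inv_mul]
    _ = s * (e * (s⁻¹ * s)) := by
      rw [(commute_of_isIdempotentElem (isIdempotentElem_inv_mul s) he).eq]
    _ = s * e * s⁻¹ * s := by simp only [mul_assoc]

theorem isIdempotentElem_mul_mul_inv (s : S) {e : S} (he : IsIdempotentElem e) :
    IsIdempotentElem (s * e * s⁻¹) :=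
  calc s * e * s⁻¹ * (s * e * s⁻¹) = s * e * s⁻¹ * s * (e * s⁻¹) := by simp only [mul_assoc]
    _ = s * (e * e) * s⁻¹ := by rw [← (semiconjBy_mul_mul_inv s he).eq]; simp only [mul_assoc]
    _ = s * e * s⁻¹ := by rw [he.eq]

section NaturalOrder

instance : LE S := ⟨nle⟩

theorem le_iff_exists_isIdempotentElem {s t : S} :
    s ≤ t ↔ ∃ e : S, IsIdempotentElem e ∧ s = e * t := by
  refine ⟨fun h => ⟨s * s⁻¹, isIdempotentElem_mul_inv s, h⟩, ?_⟩
  rintro ⟨e, he, rfl⟩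
  suffices h : e * t * (e * t)⁻¹ * t = e * t from h.symm
  calc e * t * (e * t)⁻¹ * t = e * (t * t⁻¹ * e) * t := by
        rw [mul_inv_rev, inv_eq_self_of_isIdempotentElem he]; simp only [mul_assoc]
    _ = e * (e * (t * t⁻¹)) * t := by
      rw [(commute_of_isIdempotentElem (isIdempotentElem_mul_inv t) he).eq]
    _ = e * e * (t * t⁻¹ * t) := by simp only [mul_assoc]
    _ = e * t := by rw [he.eq, InverseMonoid.mul_inv_mul]

theorem mul_le_of_isIdempotentElem {e : S} (he : IsIdempotentElem e) (s : S) : e * s ≤ s :=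
  le_iff_exists_isIdempotentElem.2 ⟨e, he, rfl⟩

instance : PartialOrder S where
  le_refl s := (InverseMonoid.mul_inv_mul s).symm
  le_trans s t u hst htu := by
    obtain ⟨e, he, rfl⟩ := le_iff_exists_isIdempotentElem.1 hst
    obtain ⟨f, hf, rfl⟩ := le_iff_exists_isIdempotentElem.1 htu
    exact le_iff_exists_isIdempotentElem.2
      ⟨e * f, he.mul_of_commute (commute_of_isIdempotentElem he hf) hf, (mul_assoc e f u).symm⟩
  le_antisymm s t hst hts := by
    have hs : s = s * s⁻¹ * t := hst
    have ht : t = t * t⁻¹ * s := hts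
    calc s = s * s⁻¹ * (t * t⁻¹ * s) := by rw [← ht, ← hs]
      _ = t * t⁻¹ * (s * s⁻¹ * s) := by
        simp only [← mul_assoc _ _ s]
        rw [(commute_of_isIdempotentElem (isIdempotentElem_mul_inv s)
          (isIdempotentElem_mul_inv t)).eq]
      _ = t := by rw [InverseMonoid.mul_inv_mul, ← ht]

instance : MulRightMono S where
  elim u s t h := by
    obtain ⟨e, he, rfl⟩ := le_iff_exists_isIdempotentElem.1 h
    exact le_iff_exists_isIdempotentElem.2 ⟨e, he, mul_assoc e t u⟩

instance : MulLeftMono S where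
  elim u s t h := by
    obtain ⟨e, he, rfl⟩ := le_iff_exists_isIdempotentElem.1 h
    refine le_iff_exists_isIdempotentElem.2
      ⟨u * e * u⁻¹, isIdempotentElem_mul_mul_inv u he, ?_⟩
    calc u * (e * t) = u * e * u⁻¹ * u * t := by
          rw [← (semiconjBy_mul_mul_inv u he).eq, mul_assoc]
      _ = u * e * u⁻¹ * (u * t) := mul_assoc _ u t

theorem inv_mono {s t : S} (h : s ≤ t) : s⁻¹ ≤ t⁻¹ := by
  obtain ⟨e, he, rfl⟩ := le_iff_exists_isIdempotentElem.1 h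
  rw [mul_inv_rev, inv_eq_self_of_isIdempotentElem he, (semiconjBy_mul_mul_inv t⁻¹ he).eq]
  exact mul_le_of_isIdempotentElem (isIdempotentElem_mul_mul_inv t⁻¹ he) t⁻¹

end NaturalOrder

section Sigma

theorem sigmaRel_of_le {s t : S} (h : s ≤ t) : sigmaRel s t := ⟨s, le_refl s, h⟩

theorem sigmaRel_symm {s t : S} : sigmaRel s t → sigmaRel t s :=
  fun ⟨u, hus, hut⟩ => ⟨u, hut, hus⟩

theorem sigmaRel_trans {s t r : S} : sigmaRel s t → sigmaRel t r → sigmaRel s r := by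
  rintro ⟨u, hus, hut⟩ ⟨v, hvt, hvr⟩
  obtain ⟨e, he, rfl⟩ := le_iff_exists_isIdempotentElem.1 hut
  obtain ⟨f, hf, rfl⟩ := le_iff_exists_isIdempotentElem.1 hvt
  have h : f * (e * t) = e * (f * t) := by
    rw [← mul_assoc, (commute_of_isIdempotentElem hf he).eq, mul_assoc]
  exact ⟨f * (e * t), (mul_le_of_isIdempotentElem hf _).trans hus,
    (h.le.trans (mul_le_of_isIdempotentElem he _)).trans hvr⟩

theorem sigmaRel_mul {s s' t t' : S} :
    sigmaRel s s' → sigmaRel t t' → sigmaRel (s * t) (s' * t') :=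
  fun ⟨u, hus, hus'⟩ ⟨v, hvt, hvt'⟩ => ⟨u * v,
    show u * v ≤ s * t from mul_le_mul' hus hvt,
    show u * v ≤ s' * t' from mul_le_mul' hus' hvt'⟩

theorem sigmaRel_inv {s t : S} : sigmaRel s t → sigmaRel s⁻¹ t⁻¹ :=
  fun ⟨u, hus, hut⟩ => ⟨u⁻¹, inv_mono hus, inv_mono hut⟩

theorem isGreatest_sigmaRel_congr {s t a : S} (h : sigmaRel s t) :
    IsGreatest {r | sigmaRel s r} a ↔ IsGreatest {r | sigmaRel t r} a := by
  have hst : {r | sigmaRel s r} = {r | sigmaRel t r} :=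
    Set.ext fun _ => ⟨sigmaRel_trans (sigmaRel_symm h), sigmaRel_trans h⟩
  rw [hst]

end Sigma

section Idempotents

/-- The idempotents of an inverse monoid, a semilattice under the natural partial order. -/
abbrev Idem (S : Type*) [InverseMonoid S] := {e : S // IsIdempotentElem e}

theorem Idem.le_iff_mul_eq {e f : Idem S} : e ≤ f ↔ (e : S) * f = e := by
  change (e : S) = e * (e : S)⁻¹ * f ↔ _
  rw [inv_eq_self_of_isIdempotentElem e.2, e.2.eq, eq_comm]

instance : SemilatticeInf (Idem S) where
  inf e f := ⟨e * f, e.2.mul_of_commute (commute_of_isIdempotentElem e.2 f.2) f.2⟩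
  inf_le_left e f := by
    change (e * f : S) ≤ e
    rw [(commute_of_isIdempotentElem e.2 f.2).eq]
    exact mul_le_of_isIdempotentElem f.2 (e : S)
  inf_le_right e f := mul_le_of_isIdempotentElem e.2 (f : S)
  le_inf d e f hde hdf := by
    rw [Idem.le_iff_mul_eq] at *
    change (d : S) * (e * f) = d
    rw [← mul_assoc, hde, hdf]

instance : OrderTop (Idem S) where
  top := 1
  le_top e := Idem.le_iff_mul_eq.2 (mul_one (e : S))

@[simp] theorem Idem.coe_inf (e f : Idem S) : (↑(e ⊓ f) : S) = e * f := rfl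

@[simp] theorem Idem.coe_top : (↑(⊤ : Idem S) : S) = 1 := rfl

/-- The idempotent `s * e * s⁻¹`, for `e` idempotent. -/
def Idem.conj (s : S) (e : Idem S) : Idem S := ⟨s * e * s⁻¹, isIdempotentElem_mul_mul_inv s e.2⟩

@[simp] theorem Idem.coe_conj (s : S) (e : Idem S) : (e.conj s : S) = s * e * s⁻¹ := rfl

theorem Idem.conj_one (e : Idem S) : e.conj 1 = e := Subtype.ext (by simp)

theorem Idem.conj_mul (s t : S) (e : Idem S) : e.conj (s * t) = (e.conj t).conj s :=
  Subtype.ext (by simp [mul_assoc])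

theorem Idem.conj_coe (e f : Idem S) : f.conj (e : S) = e ⊓ f := by
  apply Subtype.ext
  rw [coe_conj, inv_eq_self_of_isIdempotentElem e.2, mul_assoc,
    (commute_of_isIdempotentElem f.2 e.2).eq, ← mul_assoc, e.2.eq, coe_inf]

theorem Idem.conj_top_mul (s : S) : (conj s ⊤ : S) * s = s := by
  rw [coe_conj, coe_top, mul_one, InverseMonoid.mul_inv_mul]

theorem Idem.semiconjBy_conj (s : S) (e : Idem S) : SemiconjBy s (e : S) (e.conj s : S) :=
  semiconjBy_mul_mul_inv s e.2

theorem Idem.semiconjBy_finiteMeet {I : Type*} {s : S} {f g : I → Idem S}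
    (h : ∀ i, SemiconjBy s (f i : S) (g i)) {T : Set I} (hT : T.Finite) :
    SemiconjBy s ((finiteMeet (f '' T) : Idem S) : S) (finiteMeet (g '' T) : Idem S) := by
  induction T, hT using Set.Finite.induction_on with
  | empty => simp [finiteMeet_empty]
  | insert _ hT ih =>
    rw [Set.image_insert_eq, Set.image_insert_eq, finiteMeet_insert _ (hT.image f),
      finiteMeet_insert _ (hT.image g)]
    exact (h _).mul_right ih

end Idempotents

end InverseMonoid

section Words

variable {X : Type*}

theorem evalWord_eq_prod {N : Type*} [Monoid N] (f : X → N) (i : N → N) (w : Word X) :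
    evalWord f i w = (w.map fun p => cond p.2 (f p.1) (i (f p.1))).prod := by
  induction w with
  | nil => rfl
  | cons p w ih => rcases p with ⟨x, _ | _⟩ <;> simp [evalWord, ih]

theorem evalWord_append {N : Type*} [Monoid N] (f : X → N) (i : N → N) (u v : Word X) :
    evalWord f i (u ++ v) = evalWord f i u * evalWord f i v := by
  simp only [evalWord_eq_prod, List.map_append, List.prod_append]

theorem evalWord_invRev {N : Type*} [DivisionMonoid N] (f : X → N) (w : Word X) :
    evalWord f (fun a => a⁻¹) (FreeGroup.invRev w) = (evalWord f (fun a => a⁻¹) w)⁻¹ := by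
  induction w with
  | nil => simp [evalWord]
  | cons p w ih =>
    rw [FreeGroup.invRev_cons, evalWord_append, ih]
    rcases p with ⟨x, _ | _⟩ <;> simp [evalWord, FreeGroup.invRev]

theorem evalWord_surjective {G : Type*} [Group G] {ι : X → G}
    (hgen : Subgroup.closure (Set.range ι) = ⊤) :
    Function.Surjective (evalWord ι (fun a => a⁻¹) : Word X → G) := by
  intro g
  obtain ⟨x, rfl⟩ : g ∈ (FreeGroup.lift ι).range := by
    rw [FreeGroup.range_lift_eq_closure, hgen]; trivial
  obtain ⟨w, rfl⟩ := Quot.exists_rep x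
  exact ⟨w, evalWord_eq_prod ι _ w⟩

end Words

section Premorphism

attribute [local instance] InverseMonoid.toDivisionMonoid

variable {X G F : Type*} [Group G] [InverseMonoid F]

/-- A (dual) premorphism from a group to an inverse monoid: a unital, inversion-preserving map
which is submultiplicative for the natural partial order. -/
structure IsPremorphism (ψ : G → F) : Prop where
  map_one : ψ 1 = 1
  map_inv (g : G) : ψ g⁻¹ = (ψ g)⁻¹
  mul_le (g h : G) : ψ g * ψ h ≤ ψ (g * h)

theorem IsPremorphism.map_mul {ψ : G → F} (hψ : IsPremorphism ψ) (g h : G) :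
    ψ g * ψ h = ψ g * (ψ g)⁻¹ * ψ (g * h) := by
  apply le_antisymm
  · calc ψ g * ψ h = ψ g * (ψ g)⁻¹ * (ψ g * ψ h) := by
          rw [← mul_assoc, InverseMonoid.mul_inv_mul]
      _ ≤ ψ g * (ψ g)⁻¹ * ψ (g * h) := mul_le_mul_right (hψ.mul_le g h) _
  · calc ψ g * (ψ g)⁻¹ * ψ (g * h) = ψ g * (ψ g⁻¹ * ψ (g * h)) := by rw [hψ.map_inv, mul_assoc]
      _ ≤ ψ g * ψ (g⁻¹ * (g * h)) := mul_le_mul_right (hψ.mul_le _ _) _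
      _ = ψ g * ψ h := by rw [inv_mul_cancel_left]

variable {ι : X → G} {ιF : X → F} {ψ : G → F}

theorem exists_isGreatest_sigmaRel_evalWord (hgen : Subgroup.closure (Set.range ι) = ⊤) {m : F → F}
    (hm : ∀ s, IsGreatest {t | sigmaRel s t} (m s))
    (hcompat : ∀ u v : Word X, evalWord ι (fun a => a⁻¹) u = evalWord ι (fun a => a⁻¹) v →
      sigmaRel (evalWord ιF (fun s => s⁻¹) u) (evalWord ιF (fun s => s⁻¹) v)) :
    ∃ ψ : G → F, ∀ w : Word X, IsGreatest {t | sigmaRel (evalWord ιF (fun s => s⁻¹) w) t}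
      (ψ (evalWord ι (fun a => a⁻¹) w)) := by
  choose word hword using evalWord_surjective hgen
  exact ⟨fun g => m (evalWord ιF (fun s => s⁻¹) (word g)), fun w =>
    (isGreatest_sigmaRel_congr (hcompat _ _ (hword _))).1 (hm _)⟩

theorem isPremorphism_of_isGreatest (hgen : Subgroup.closure (Set.range ι) = ⊤)
    (hψ : ∀ w : Word X, IsGreatest {t | sigmaRel (evalWord ιF (fun s => s⁻¹) w) t}
      (ψ (evalWord ι (fun a => a⁻¹) w))) : IsPremorphism ψ := by
  have inv_le (g : G) : (ψ g)⁻¹ ≤ ψ g⁻¹ := by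
    obtain ⟨w, rfl⟩ := evalWord_surjective hgen g
    rw [← evalWord_invRev]
    refine (hψ _).2 ?_
    rw [Set.mem_ofPred_eq, evalWord_invRev]
    exact sigmaRel_inv (hψ w).1
  refine ⟨?_, fun g => le_antisymm ?_ (inv_le g), fun g h => ?_⟩
  · have h : (1 : F) ≤ ψ 1 := (hψ []).2 (sigmaRel_of_le le_rfl)
    have h' : (1 : F) = 1 * 1⁻¹ * ψ 1 := h
    simpa using h'.symm
  · simpa using inv_mono (inv_le g⁻¹)
  · obtain ⟨u, rfl⟩ := evalWord_surjective hgen g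
    obtain ⟨v, rfl⟩ := evalWord_surjective hgen h
    rw [← evalWord_append]
    refine (hψ _).2 ?_
    rw [Set.mem_ofPred_eq, evalWord_append]
    exact sigmaRel_mul (hψ u).1 (hψ v).1

end Premorphism

section Cells

variable {X G : Type*}

/-- The cells of a graph: `(a, none)` stands for the vertex `a`, and `(a, some x)` for the edge
`(a, x)` labelled in `X`. Edges labelled in `Ḡ` are not recorded. -/
def cells (A : Graph X G) : Set (G × Option X) :=
  {c | c.2.elim (c.1 ∈ A.1) fun x => (c.1, Sum.inl x) ∈ A.2}

@[simp] theorem mk_none_mem_cells {A : Graph X G} {a : G} : (a, none) ∈ cells A ↔ a ∈ A.1 := Iff.rfl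

@[simp] theorem mk_some_mem_cells {A : Graph X G} {a : G} {x : X} :
    (a, some x) ∈ cells A ↔ (a, Sum.inl x) ∈ A.2 := Iff.rfl

theorem finite_cells {A : Graph X G} (hV : A.1.Finite) (hE : A.2.Finite) : (cells A).Finite := by
  refine ((hV.image fun a => (a, none)).union
    (hE.image fun e => (e.1, e.2.elim some fun _ => none))).subset ?_
  rintro ⟨a, _ | x⟩ h
  · exact Or.inl ⟨a, h, rfl⟩
  · exact Or.inr ⟨(a, Sum.inl x), h, rfl⟩

theorem cells_gunion (A B : Graph X G) : cells (gunion A B) = cells A ∪ cells B := by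
  ext ⟨a, _ | x⟩ <;> simp [gunion]

variable [Group G]

theorem cells_clo (A : Graph X G) : cells (clo A) = cells A := by
  ext ⟨a, _ | x⟩ <;> simp [clo]

theorem cells_gmul (g : G) (A : Graph X G) :
    cells (gmul g A) = (fun c => (g * c.1, c.2)) '' cells A := by
  ext ⟨a, _ | x⟩ <;> simp [gmul, ← eq_inv_mul_iff_mul_eq]

theorem cells_gammaOne : cells (gammaOne : Graph X G) = {(1, none)} := by
  ext ⟨a, _ | x⟩ <;> simp [gammaOne]

theorem cells_gammaBar (g : G) : cells (gammaBar g : Graph X G) = {(1, none), (g, none)} := by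
  ext ⟨a, _ | x⟩ <;> simp [gammaBar]

theorem cells_gammaX (ι : X → G) (x : X) :
    cells (gammaX ι x) = {(1, some x), (1, none), (ι x, none)} := by
  ext ⟨a, _ | y⟩ <;> simp [gammaX]

end Cells

section Extension

attribute [local instance] InverseMonoid.toDivisionMonoid

variable {X G F : Type*} [InverseMonoid F] {ψ : G → F} {ιF : X → F}

/-- The idempotent of a cell: `ψ a * (ψ a)⁻¹` for a vertex `a`, and
`ψ a * ιF x * (ιF x)⁻¹ * (ψ a)⁻¹` for an edge `(a, x)`. -/
def cellIdem (ψ : G → F) (ιF : X → F) (c : G × Option X) : Idem F :=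
  (c.2.elim ⊤ fun x => Idem.conj (ιF x) ⊤).conj (ψ c.1)

/-- The meet of the idempotents of all cells of a finite graph. -/
noncomputable def graphIdem (ψ : G → F) (ιF : X → F) (A : Graph X G) : Idem F :=
  finiteMeet (cellIdem ψ ιF '' cells A)

/-- The extension `(A, g) ↦ e A * ψ g` of a premorphism `ψ` to finite graphs with a marked vertex,
where `e A` is the meet of the idempotents of the cells of `A`. -/
noncomputable def extension (ψ : G → F) (ιF : X → F) (p : Elt X G) : F :=
  graphIdem ψ ιF p.1 * ψ p.2

theorem cellIdem_none_mul (g : G) : (cellIdem ψ ιF (g, none) : F) * ψ g = ψ g :=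
  Idem.conj_top_mul (ψ g)

theorem graphIdem_gunion {A B : Graph X G} (hA : (cells A).Finite) (hB : (cells B).Finite) :
    graphIdem ψ ιF (gunion A B) = graphIdem ψ ιF A ⊓ graphIdem ψ ιF B := by
  rw [graphIdem, cells_gunion, Set.image_union, finiteMeet_union (hA.image _) (hB.image _),
    graphIdem, graphIdem]

theorem graphIdem_mul_map_mul_inv {A : Graph X G} (hA : (cells A).Finite) {g : G} (hg : g ∈ A.1) :
    (graphIdem ψ ιF A : F) * (ψ g * (ψ g)⁻¹) = graphIdem ψ ιF A := by
  have h : graphIdem ψ ιF A ≤ cellIdem ψ ιF (g, none) :=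
    (isGLB_finiteMeet (hA.image _)).1 (Set.mem_image_of_mem _ hg)
  simpa [cellIdem] using Idem.le_iff_mul_eq.1 h

theorem extension_le (p : Elt X G) : extension ψ ιF p ≤ ψ p.2 :=
  mul_le_of_isIdempotentElem (graphIdem ψ ιF p.1).2 _

variable [Group G]

theorem IsPremorphism.conj_cellIdem (hψ : IsPremorphism ψ) (g : G) (c : G × Option X) :
    (cellIdem ψ ιF c).conj (ψ g) = Idem.conj (ψ g) ⊤ ⊓ cellIdem ψ ιF (g * c.1, c.2) := by
  have h : ψ g * ψ c.1 = (Idem.conj (ψ g) ⊤ : F) * ψ (g * c.1) := by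
    simpa using hψ.map_mul g c.1
  rw [cellIdem, ← Idem.conj_mul, h, Idem.conj_mul, Idem.conj_coe, cellIdem]

theorem IsPremorphism.semiconjBy_cellIdem (hψ : IsPremorphism ψ) (g : G) (c : G × Option X) :
    SemiconjBy (ψ g) (cellIdem ψ ιF c : F) (cellIdem ψ ιF (g * c.1, c.2)) :=
  calc ψ g * (cellIdem ψ ιF c : F) = (cellIdem ψ ιF c).conj (ψ g) * ψ g :=
        Idem.semiconjBy_conj _ _
    _ = cellIdem ψ ιF (g * c.1, c.2) * ((Idem.conj (ψ g) ⊤ : F) * ψ g) := by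
      rw [hψ.conj_cellIdem, inf_comm, Idem.coe_inf, mul_assoc]
    _ = cellIdem ψ ιF (g * c.1, c.2) * ψ g := by rw [Idem.conj_top_mul]

theorem graphIdem_clo (A : Graph X G) : graphIdem ψ ιF (clo A) = graphIdem ψ ιF A := by
  rw [graphIdem, cells_clo, graphIdem]

theorem IsPremorphism.semiconjBy_graphIdem (hψ : IsPremorphism ψ) (g : G) {A : Graph X G}
    (hA : (cells A).Finite) :
    SemiconjBy (ψ g) (graphIdem ψ ιF A : F) (graphIdem ψ ιF (gmul g A)) := by
  rw [graphIdem, graphIdem, cells_gmul, Set.image_image]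
  exact Idem.semiconjBy_finiteMeet (hψ.semiconjBy_cellIdem g) hA

theorem IsPremorphism.graphIdem_mul_map_mul (hψ : IsPremorphism ψ) {A : Graph X G}
    (hA : (cells A).Finite) {g : G} (hg : g ∈ A.1) (h : G) :
    (graphIdem ψ ιF A : F) * (ψ g * ψ h) = graphIdem ψ ιF A * ψ (g * h) := by
  rw [hψ.map_mul, ← mul_assoc, graphIdem_mul_map_mul_inv hA hg]

theorem IsPremorphism.extension_mulW (hψ : IsPremorphism ψ) {p q : Elt X G}
    (hp : (cells p.1).Finite) (hq : (cells q.1).Finite) (hpV : p.2 ∈ p.1.1) :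
    extension ψ ιF (mulW p q) = extension ψ ιF p * extension ψ ιF q := by
  obtain ⟨A, g⟩ := p
  obtain ⟨B, h⟩ := q
  have hgB : (cells (gmul g B)).Finite := by rw [cells_gmul]; exact hq.image _
  symm
  calc (graphIdem ψ ιF A : F) * ψ g * (graphIdem ψ ιF B * ψ h)
      = graphIdem ψ ιF A * (ψ g * graphIdem ψ ιF B) * ψ h := by simp only [mul_assoc]
    _ = graphIdem ψ ιF A * graphIdem ψ ιF (gmul g B) * (ψ g * ψ h) := by
      rw [(hψ.semiconjBy_graphIdem g hq).eq]; simp only [mul_assoc]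
    _ = graphIdem ψ ιF (gmul g B) * (graphIdem ψ ιF A * (ψ g * ψ h)) := by
      rw [← Idem.coe_inf, inf_comm, Idem.coe_inf, mul_assoc]
    _ = graphIdem ψ ιF (gmul g B) * (graphIdem ψ ιF A * ψ (g * h)) := by
      rw [hψ.graphIdem_mul_map_mul hp hpV]
    _ = extension ψ ιF (mulW (A, g) (B, h)) := by
      rw [extension, mulW, graphIdem_clo, graphIdem_gunion hp hgB, inf_comm, Idem.coe_inf,
        mul_assoc]

theorem IsPremorphism.extension_invM (hψ : IsPremorphism ψ) {p : Elt X G}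
    (hp : (cells p.1).Finite) : extension ψ ιF (invM p) = (extension ψ ιF p)⁻¹ := by
  rw [extension, extension, mul_inv_rev, inv_eq_self_of_isIdempotentElem (graphIdem ψ ιF p.1).2,
    ← hψ.map_inv, (hψ.semiconjBy_graphIdem p.2⁻¹ hp).eq, invM]

theorem IsPremorphism.cellIdem_one_none (hψ : IsPremorphism ψ) :
    cellIdem ψ ιF (1, none) = ⊤ := by
  rw [cellIdem, hψ.map_one, Idem.conj_one, Option.elim]

theorem IsPremorphism.extension_clo_gammaOne (hψ : IsPremorphism ψ) :
    extension ψ ιF (clo gammaOne, 1) = 1 := by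
  have h : graphIdem ψ ιF gammaOne = ⊤ := by
    rw [graphIdem, cells_gammaOne, Set.image_singleton, finiteMeet_singleton,
      hψ.cellIdem_one_none]
  rw [extension, graphIdem_clo, h, hψ.map_one, Idem.coe_top, one_mul]

theorem IsPremorphism.extension_mW (hψ : IsPremorphism ψ) (p : Elt X G) :
    extension ψ ιF (mW p) = ψ p.2 := by
  have h : graphIdem ψ ιF (gammaBar p.2) = cellIdem ψ ιF (p.2, none) := by
    rw [graphIdem, cells_gammaBar, Set.image_pair, hψ.cellIdem_one_none,
      finiteMeet_insert _ (Set.finite_singleton _), finiteMeet_singleton, top_inf_eq]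
  rw [extension, mW, graphIdem_clo, h, cellIdem_none_mul]

theorem IsPremorphism.extension_clo_gammaX (hψ : IsPremorphism ψ) {ι : X → G} {x : X}
    (hx : ιF x ≤ ψ (ι x)) : extension ψ ιF (clo (gammaX ι x), ι x) = ιF x := by
  have h : graphIdem ψ ιF (gammaX ι x) =
      Idem.conj (ιF x) ⊤ ⊓ cellIdem ψ ιF (ι x, none) := by
    rw [graphIdem, cells_gammaX, Set.image_insert_eq, Set.image_pair, hψ.cellIdem_one_none,
      finiteMeet_insert _ (Set.toFinite _), finiteMeet_insert _ (Set.finite_singleton _),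
      finiteMeet_singleton, top_inf_eq, cellIdem, hψ.map_one, Idem.conj_one, Option.elim]
  calc extension ψ ιF (clo (gammaX ι x), ι x)
      = (Idem.conj (ιF x) ⊤ : F) * (cellIdem ψ ιF (ι x, none) * ψ (ι x)) := by
        rw [extension, graphIdem_clo, h, Idem.coe_inf, mul_assoc]
    _ = ιF x * (ιF x)⁻¹ * ψ (ι x) := by rw [cellIdem_none_mul, Idem.coe_conj, Idem.coe_top, mul_one]
    _ = ιF x := hx.symm

end Extension

theorem finite_cells_of_mem_Mwedge {X G : Type*} [Group G] {ι : X → G} {p : Elt X G}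
    (hp : p ∈ Mwedge ι) : (cells p.1).Finite :=
  finite_cells hp.1.1.1.1 hp.1.1.1.2.1

theorem universal_property_Mwedge_general {X G F : Type*} [Group G] [InverseMonoid F] (ι : X → G)
    (hgen : Subgroup.closure (Set.range ι) = ⊤)
    (m : F → F)
    (hm_sigma : ∀ s : F, sigmaRel s (m s))
    (hm_max : ∀ s t : F, sigmaRel s t → nle t (m s))
    (ιF : X → F)
    (hcompat : ∀ u v : Word X,
      evalWord ι (fun a => a⁻¹) u = evalWord ι (fun a => a⁻¹) v →
      sigmaRel (evalWord ιF (fun s => s⁻¹) u) (evalWord ιF (fun s => s⁻¹) v)) :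
    ∃ φ : Elt X G → F,
      φ ((clo gammaOne, 1) : Elt X G) = 1 ∧
      (∀ p q : Elt X G, p ∈ Mwedge ι → q ∈ Mwedge ι → φ (mulW p q) = φ p * φ q) ∧
      (∀ p : Elt X G, p ∈ Mwedge ι → φ (invM p) = (φ p)⁻¹) ∧
      (∀ p : Elt X G, p ∈ Mwedge ι → φ (mW p) = m (φ p)) ∧
      (∀ x : X, φ ((clo (gammaX ι x), ι x) : Elt X G) = ιF x) ∧
      (∀ p : Elt X G, p ∈ Mwedge ι → ∀ w : Word X,
        evalWord ι (fun a => a⁻¹) w = p.2 →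
        sigmaRel (φ p) (evalWord ιF (fun s => s⁻¹) w)) := by
  have hm (s : F) : IsGreatest {t | sigmaRel s t} (m s) := ⟨hm_sigma s, hm_max s⟩
  obtain ⟨ψ, hψ_max⟩ := exists_isGreatest_sigmaRel_evalWord hgen hm hcompat
  have hψ : IsPremorphism ψ := isPremorphism_of_isGreatest hgen hψ_max
  have hx (x : X) : ιF x ≤ ψ (ι x) := by
    simpa [evalWord] using (hψ_max [(x, true)]).2 (sigmaRel_of_le (le_refl _))
  have hφ_sigma (p : Elt X G) (w : Word X) (hw : evalWord ι (fun a => a⁻¹) w = p.2) :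
      sigmaRel (extension ψ ιF p) (evalWord ιF (fun s => s⁻¹) w) :=
    sigmaRel_trans (sigmaRel_of_le (hw ▸ extension_le p)) (sigmaRel_symm (hψ_max w).1)
  refine ⟨extension ψ ιF, hψ.extension_clo_gammaOne, fun p q hp hq => ?_, fun p hp => ?_,
    fun p _ => ?_, fun x => hψ.extension_clo_gammaX (hx x), fun p _ => hφ_sigma p⟩
  · exact hψ.extension_mulW (finite_cells_of_mem_Mwedge hp) (finite_cells_of_mem_Mwedge hq) hp.2
  · exact hψ.extension_invM (finite_cells_of_mem_Mwedge hp)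
  · obtain ⟨w, hw⟩ := evalWord_surjective hgen p.2
    rw [hψ.extension_mW, ← hw]
    exact (hψ_max w).unique ((isGreatest_sigmaRel_congr (hφ_sigma p w hw)).1 (hm _))

/-- Theorem 4.5, universal property of `M^∧(G,Y)`.  Let `G`
be an `X`-generated group and `F` an `F`-inverse monoid (with `m`-operation
`m`) equipped with `ι_F : X → F` generating `F` in the enriched signature
`(·, ⁻¹, m, 1)`.  Assume that words over `X ∪ X⁻¹` with equal values in `G`
have `σ`-related values in `F`.  Then there is a monoid homomorphism
`φ : M^∧(G,Y) → F` preserving inversion, intertwining the `m`-operations,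
sending the generator `(Γ_x^∧, [x])` to `ι_F x`, and such that `φ(A,g)` is
`σ`-related to the value in `F` of any word over `X ∪ X⁻¹` whose value in `G`
is `g`. -/
theorem universal_property_Mwedge {X G F : Type*} [Nonempty X] [Group G]
    [InverseMonoid F] (ι : X → G)
    (hgen : Subgroup.closure (Set.range ι) = ⊤)
    (m : F → F)
    -- `F` is `F`-inverse with `m s` the maximum of the `σ`-class of `s`:
    (hm_sigma : ∀ s : F, sigmaRel s (m s))
    (hm_max : ∀ s t : F, sigmaRel s t → nle t (m s))
    (ιF : X → F)
    -- `F` is generated by `ι_F(X)` in the enriched signature: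
    (hFgen : ∀ P : Set F, (1 : F) ∈ P → (∀ x : X, ιF x ∈ P) →
      (∀ a b : F, a ∈ P → b ∈ P → a * b ∈ P) →
      (∀ a : F, a ∈ P → a⁻¹ ∈ P) →
      (∀ a : F, a ∈ P → m a ∈ P) → ∀ f : F, f ∈ P)
    -- words with equal values in `G` have `σ`-related values in `F`:
    (hcompat : ∀ u v : Word X,
      evalWord ι (fun a => a⁻¹) u = evalWord ι (fun a => a⁻¹) v →
      sigmaRel (evalWord ιF (fun s => s⁻¹) u) (evalWord ιF (fun s => s⁻¹) v)) :
    ∃ φ : Elt X G → F,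
      -- `φ` is a monoid homomorphism on `M^∧(G,Y)`
      φ ((clo gammaOne, 1) : Elt X G) = 1 ∧
      (∀ p q : Elt X G, p ∈ Mwedge ι → q ∈ Mwedge ι →
        φ (mulW p q) = φ p * φ q) ∧
      -- `φ` preserves inversion
      (∀ p : Elt X G, p ∈ Mwedge ι → φ (invM p) = (φ p)⁻¹) ∧
      -- `φ` intertwines the `m`-operations: `φ(Γ_ḡ^∧, g) = m(φ(A,g))`
      (∀ p : Elt X G, p ∈ Mwedge ι → φ (mW p) = m (φ p)) ∧
      -- `φ` sends the generator `(Γ_x^∧, [x])` to `ι_F x`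
      (∀ x : X, φ ((clo (gammaX ι x), ι x) : Elt X G) = ιF x) ∧
      -- `φ(A,g)` is `σ`-related to `[w]_F` whenever `[w]_G = g`
      (∀ p : Elt X G, p ∈ Mwedge ι → ∀ w : Word X,
        evalWord ι (fun a => a⁻¹) w = p.2 →
        sigmaRel (φ p) (evalWord ιF (fun s => s⁻¹) w)) := by
  exact universal_property_Mwedge_general ι hgen m hm_sigma hm_max ιF hcompat

end FInvPaper
end

section
/- For every g ∈ G and every representation g = ι(x₁)^{ε₁} ⋯ ι(x_n)^{ε_n} with n ≥ 1, x_i ∈ X and ε_i ∈ {1,−1}, one has (Γ_ḡ^∧, g) = m((Γ_{x₁}^∧, [x₁]_G)^{ε₁} ⋯ (Γ_{x_n}^∧, [x_n]_G)^{ε₁}) in M^∧(G,Y), where m(A,g) := (Γ_ḡ^∧, g). Consequently, M^∧(G,Y) is X-generated in the enriched signature: the smallest subset of M^∧(G,Y) containing the identity and all elements (Γ_x^∧, [x]_G) for x ∈ X, and closed under multiplication, inversion and the operation m, is all of M^∧(G,Y). -/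
namespace FInvPaper

variable {X G : Type*} [Group G]

/-- The generator `(Γ_x^∧, [x])` of `M^∧(G,Y)`. -/
def genW (ι : X → G) (x : X) : Elt X G := (clo (gammaX ι x), ι x)

/-- The value in `M^∧(G,Y)` of a word over `X ∪ X⁻¹`:
`x ↦ (Γ_x^∧, [x])`, `x⁻¹ ↦ (Γ_x^∧, [x])⁻¹`, empty word `↦` identity. -/
def evalWordW (ι : X → G) : Word X → Elt X G
  | [] => (clo gammaOne, 1)
  | (x, b) :: w => mulW (if b then genW ι x else invM (genW ι x)) (evalWordW ι w)

/-!
The first claim holds because both sides are determined by the group component of the word's value.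
As `ι` generates `G`, it puts every `(Γ_ḡ^∧, g)` into a subset `P` that contains the generators and
is closed under the operations. Hence `P` contains `(Γ_y^∧, ι_Y y)` for every letter `y ∈ Y`.
Multiplying it by `(Γ_ā^∧, a)` on the left and by `(Γ_b̄^∧, b)` with `b = (a ι_Y y)⁻¹` on the right
moves `Γ_y` to the edge `(a, y)`, and only adds edges that the closure contains anyway, so `P`
contains an idempotent for each edge. A closed graph `Γ` is the union of its edges and the origin,
so multiplying finitely many of these idempotents gives `(Γ, 1)`, and one more factor `(Γ_ḡ^∧, g)`
gives `(Γ, g)`.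
-/

theorem clo_eq_self {Γ : Graph X G} (hΓ : IsClosedGr Γ) : clo Γ = Γ := by
  refine Prod.ext rfl (Set.union_eq_left.2 ?_)
  rintro _ ⟨a, ha, b, hb, rfl⟩
  exact hΓ a ha b hb

theorem isClosedGr_clo (Γ : Graph X G) : IsClosedGr (clo Γ) :=
  fun a ha b hb => Or.inr ⟨a, ha, b, hb, rfl⟩

theorem clo_mono : Monotone (clo : Graph X G → Graph X G) := by
  rintro Γ Δ ⟨hV, hE⟩
  refine ⟨hV, Set.union_subset_union hE ?_⟩
  rintro _ ⟨a, ha, b, hb, rfl⟩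
  exact ⟨a, hV ha, b, hV hb, rfl⟩

/-- The closure `Γ ↦ Γ^∧` as a closure operator on graphs ordered by inclusion, whose supremum
is `gunion`. -/
def cloOperator : ClosureOperator (Graph X G) :=
  .mk' clo clo_mono (fun _ => ⟨subset_rfl, Set.subset_union_left⟩)
    fun Γ => (clo_eq_self (isClosedGr_clo Γ)).le

theorem clo_gunion_clo_clo (Γ Δ : Graph X G) :
    clo (gunion (clo Γ) (clo Δ)) = clo (gunion Γ Δ) :=
  cloOperator.closure_sup_closure Γ Δ

theorem gmul_clo (g : G) (Γ : Graph X G) : gmul g (clo Γ) = clo (gmul g Γ) := by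
  refine Prod.ext rfl ((Set.image_union _ _ _).trans (congrArg _ ?_))
  ext e
  constructor
  · rintro ⟨_, ⟨a, ha, b, hb, rfl⟩, rfl⟩
    exact ⟨g * a, ⟨a, ha, rfl⟩, g * b, ⟨b, hb, rfl⟩, by simp [mul_inv_rev, mul_assoc]⟩
  · rintro ⟨_, ⟨a, ha, rfl⟩, _, ⟨b, hb, rfl⟩, rfl⟩
    exact ⟨(a, Sum.inr (a⁻¹ * b)), ⟨a, ha, b, hb, rfl⟩, by simp [mul_inv_rev, mul_assoc]⟩

theorem gmul_one (Γ : Graph X G) : gmul 1 Γ = Γ := by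
  simp [gmul]

theorem mulW_clo_clo (Γ Δ : Graph X G) (g h : G) :
    mulW (clo Γ, g) (clo Δ, h) = (clo (gunion Γ (gmul g Δ)), g * h) := by
  simp only [mulW, gmul_clo, clo_gunion_clo_clo]

theorem clo_gammaBar (g : G) : clo (gammaBar g : Graph X G) = clo ({1, g}, ∅) := by
  refine Prod.ext rfl ((Set.union_eq_right.2 ?_).trans (Set.empty_union _).symm)
  rintro _ rfl
  exact ⟨1, Set.mem_insert 1 _, g, Or.inr rfl, by rw [inv_one, one_mul]⟩

theorem mulW_clo_gammaBar {Γ : Graph X G} {g h : G} (hg : g ∈ Γ.1) (hgh : g * h ∈ Γ.1) :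
    mulW (clo Γ, g) (clo (gammaBar h), h) = (clo Γ, g * h) := by
  rw [clo_gammaBar, mulW_clo_clo]
  refine Prod.ext (congrArg clo (Prod.ext (Set.union_eq_left.2 ?_) ?_)) rfl
  · simp [gmul, Set.image_insert_eq, Set.insert_subset_iff, hg, hgh]
  · simp [gunion, gmul]

/-- The graph with edge set `E` whose vertices are the origin and the endpoints of the edges. -/
def edgeSpan (ι : X → G) (E : Set (G × YT X G)) : Graph X G :=
  (insert 1 (⋃ e ∈ E, {e.1, e.1 * iotaY ι e.2}), E)

section EdgeSpan

variable (ι : X → G)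

theorem edgeSpan_empty : edgeSpan ι ∅ = gammaOne := by
  simp [edgeSpan, gammaOne]

theorem edgeSpan_union (E F : Set (G × YT X G)) :
    edgeSpan ι (E ∪ F) = gunion (edgeSpan ι E) (edgeSpan ι F) := by
  simp only [edgeSpan, gunion, Set.biUnion_union, Set.insert_union_distrib]

theorem edgeSpan_singleton (a : G) (y : YT X G) :
    edgeSpan ι {(a, y)} = ({1, a, a * iotaY ι y}, {(a, y)}) := by
  simp [edgeSpan]

theorem edgeSpan_inl (x : X) : edgeSpan ι {(1, Sum.inl x)} = gammaX ι x := by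
  simp [edgeSpan_singleton, gammaX, iotaY]

theorem edgeSpan_inr (g : G) : edgeSpan ι {(1, Sum.inr g)} = gammaBar g := by
  simp [edgeSpan_singleton, gammaBar, iotaY]

theorem mulW_clo_gammaBar_edgeSpan (a : G) (y : YT X G) :
    mulW (clo (gammaBar a), a) (clo (edgeSpan ι {(1, y)}), iotaY ι y) =
      (clo (edgeSpan ι {(a, y)}), a * iotaY ι y) := by
  rw [clo_gammaBar, mulW_clo_clo, edgeSpan_singleton, edgeSpan_singleton]
  refine Prod.ext (congrArg clo (Prod.ext ?_ ?_)) rfl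
  · simp [gunion, gmul, Set.image_pair, Set.insert_comm _ (1 : G), Set.pair_comm]
  · simp [gunion, gmul]

variable {ι}

theorem IsClosedGr.edgeSpan_eq {Γ : Graph X G} (hc : IsClosedGr Γ) (hs : IsSubgraph ι Γ) :
    edgeSpan ι Γ.2 = Γ := by
  obtain ⟨-, -, one_mem, edge_mem⟩ := hs
  refine Prod.ext (Set.Subset.antisymm ?_ fun v hv => ?_) rfl
  · refine Set.insert_subset one_mem (Set.iUnion₂_subset fun e he => ?_)
    exact Set.pair_subset (edge_mem e he).1 (edge_mem e he).2
  · exact Or.inr (Set.mem_biUnion (hc v hv v hv) (Set.mem_insert v _))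

end EdgeSpan

theorem evalWordW_snd (ι : X → G) (w : Word X) :
    (evalWordW ι w).2 = evalWord ι (fun a => a⁻¹) w := by
  induction w with
  | nil => rfl
  | cons l w ih =>
    obtain ⟨x, _ | _⟩ := l <;> exact congrArg _ ih

theorem mW_evalWordW (ι : X → G) (w : Word X) :
    mW (evalWordW ι w) =
      (clo (gammaBar (evalWord ι (fun a => a⁻¹) w)), evalWord ι (fun a => a⁻¹) w) := by
  rw [mW, evalWordW_snd]

theorem exists_evalWord_eq {ι : X → G} {g : G} (hg : g ∈ Subgroup.closure (Set.range ι)) :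
    ∃ w : Word X, evalWord ι (fun a => a⁻¹) w = g := by
  induction hg using Subgroup.closure_induction_left with
  | one => exact ⟨[], rfl⟩
  | mul_left _ hx _ _ ih =>
    obtain ⟨⟨x, rfl⟩, w, rfl⟩ := hx, ih
    exact ⟨(x, true) :: w, rfl⟩
  | inv_mul_cancel _ hx _ _ ih =>
    obtain ⟨⟨x, rfl⟩, w, rfl⟩ := hx, ih
    exact ⟨(x, false) :: w, rfl⟩

/-- `P` contains the identity `(Γ_1^∧, 1)` and the generators `(Γ_x^∧, [x])`, and is closed under
the operations `·`, `⁻¹` and `m`. -/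
structure IsEnrichedClosed (ι : X → G) (P : Set (Elt X G)) : Prop where
  one_mem : (clo gammaOne, 1) ∈ P
  genW_mem : ∀ x, genW ι x ∈ P
  mul_mem : ∀ p q, p ∈ P → q ∈ P → mulW p q ∈ P
  inv_mem : ∀ p, p ∈ P → invM p ∈ P
  m_mem : ∀ p, p ∈ P → mW p ∈ P

namespace IsEnrichedClosed

variable {ι : X → G} {P : Set (Elt X G)}

theorem evalWordW_mem (hP : IsEnrichedClosed ι P) (w : Word X) : evalWordW ι w ∈ P := by
  induction w with
  | nil => exact hP.one_mem
  | cons l w ih =>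
    obtain ⟨x, _ | _⟩ := l
    · exact hP.mul_mem _ _ (hP.inv_mem _ (hP.genW_mem x)) ih
    · exact hP.mul_mem _ _ (hP.genW_mem x) ih

theorem gammaBar_mem (hP : IsEnrichedClosed ι P) (hgen : Subgroup.closure (Set.range ι) = ⊤)
    (g : G) : (clo (gammaBar g), g) ∈ P := by
  obtain ⟨w, rfl⟩ := exists_evalWord_eq (hgen ▸ Subgroup.mem_top g)
  exact mW_evalWordW ι w ▸ hP.m_mem _ (hP.evalWordW_mem w)

theorem letter_mem (hP : IsEnrichedClosed ι P) (hgen : Subgroup.closure (Set.range ι) = ⊤)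
    (y : YT X G) : (clo (edgeSpan ι {(1, y)}), iotaY ι y) ∈ P := by
  rcases y with x | g
  · exact edgeSpan_inl ι x ▸ hP.genW_mem x
  · exact edgeSpan_inr ι g ▸ hP.gammaBar_mem hgen g

theorem edgeSpan_singleton_mem (hP : IsEnrichedClosed ι P)
    (hgen : Subgroup.closure (Set.range ι) = ⊤) (e : G × YT X G) :
    (clo (edgeSpan ι {e}), 1) ∈ P := by
  obtain ⟨a, y⟩ := e
  have bar_mem := hP.gammaBar_mem hgen
  have translate_mem : (clo (edgeSpan ι {(a, y)}), a * iotaY ι y) ∈ P :=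
    mulW_clo_gammaBar_edgeSpan ι a y ▸ hP.mul_mem _ _ (bar_mem a) (hP.letter_mem hgen y)
  have hmul := hP.mul_mem _ _ translate_mem (bar_mem (a * iotaY ι y)⁻¹)
  rwa [mulW_clo_gammaBar (by simp [edgeSpan_singleton]) (by simp [edgeSpan_singleton]),
    mul_inv_cancel] at hmul

theorem edgeSpan_mem (hP : IsEnrichedClosed ι P) (hgen : Subgroup.closure (Set.range ι) = ⊤)
    {E : Set (G × YT X G)} (hE : E.Finite) : (clo (edgeSpan ι E), 1) ∈ P := by
  induction E, hE using Set.Finite.induction_on with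
  | empty => exact edgeSpan_empty ι ▸ hP.one_mem
  | @insert e E _ _ ih =>
    have hmul := hP.mul_mem _ _ (hP.edgeSpan_singleton_mem hgen e) ih
    rwa [mulW_clo_clo, gmul_one, ← edgeSpan_union, mul_one, ← Set.insert_eq] at hmul

theorem Mwedge_subset (hP : IsEnrichedClosed ι P)
    (hgen : Subgroup.closure (Set.range ι) = ⊤) : Mwedge ι ⊆ P := by
  rintro ⟨Γ, g⟩ ⟨⟨⟨hs : IsSubgraph ι Γ, -⟩, hc : IsClosedGr Γ⟩, hg : g ∈ Γ.1⟩
  have idem_mem : (clo Γ, 1) ∈ P := hc.edgeSpan_eq hs ▸ hP.edgeSpan_mem hgen hs.2.1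
  have hmul := hP.mul_mem _ _ idem_mem (hP.gammaBar_mem hgen g)
  rwa [mulW_clo_gammaBar hs.2.2.1 (by rwa [one_mul]), one_mul, clo_eq_self hc] at hmul

end IsEnrichedClosed

/-- For every `g ∈ G` and every representation
`g = ι(x₁)^{ε₁} ⋯ ι(x_n)^{ε_n}` (`n ≥ 1`) one has
`(Γ_ḡ^∧, g) = m((Γ_{x₁}^∧,[x₁])^{ε₁} ⋯ (Γ_{x_n}^∧,[x_n])^{ε_n})` in `M^∧(G,Y)`,
where `m(A,g) = (Γ_ḡ^∧, g)`.  Consequently `M^∧(G,Y)` is `X`-generated in the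
enriched signature `(·, ⁻¹, m, 1)`: the smallest subset of `M^∧(G,Y)`
containing the identity and the generators `(Γ_x^∧, [x])` and closed under
multiplication, inversion and `m` is all of `M^∧(G,Y)`. -/
theorem Mwedge_X_generated {X G : Type*} [Nonempty X] [Group G] (ι : X → G)
    (hgen : Subgroup.closure (Set.range ι) = ⊤) :
    (∀ (g : G) (w : Word X), w ≠ [] → evalWord ι (fun a => a⁻¹) w = g →
      ((clo (gammaBar g), g) : Elt X G) = mW (evalWordW ι w)) ∧
    (∀ P : Set (Elt X G), P ⊆ Mwedge ι →
      ((clo gammaOne, 1) : Elt X G) ∈ P →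
      (∀ x : X, genW ι x ∈ P) →
      (∀ p q : Elt X G, p ∈ P → q ∈ P → mulW p q ∈ P) →
      (∀ p : Elt X G, p ∈ P → invM p ∈ P) →
      (∀ p : Elt X G, p ∈ P → mW p ∈ P) →
      ∀ p ∈ Mwedge ι, p ∈ P) := by
  refine ⟨?_, fun P _ one_mem genW_mem mul_mem inv_mem m_mem p hp => ?_⟩
  · rintro _ w - rfl
    exact (mW_evalWordW ι w).symm
  · have hP : IsEnrichedClosed ι P := ⟨one_mem, genW_mem, mul_mem, inv_mem, m_mem⟩
    exact hP.Mwedge_subset hgen hp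

end FInvPaper
end

section
/- Let a group G act partially on a meet-semilattice (L,⊓) by order isomorphisms between order ideals, and let j be a G-invariant dual-closure operator on L. Then the relation ρ̃_j on L ⋊ G defined by (e,g) ρ̃_j (f,h) iff g = h and j(e) = j(f) is a congruence of the inverse semigroup L ⋊ G: it is an equivalence relation, and if (e,g) ρ̃_j (f,h) then for every (d,s) ∈ L ⋊ G both (e,g)(d,s) ρ̃_j (f,h)(d,s) and (d,s)(e,g) ρ̃_j (d,s)(f,h), and (e,g)⁻¹ ρ̃_j (f,h)⁻¹; moreover ρ̃_j is contained in the minimum group congruence σ of L ⋊ G (two elements of L ⋊ G being σ-related iff their group components are equal). -/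
namespace FInvPaper

/-- A partial action of a group `G` on a meet-semilattice `L` by order
isomorphisms between order ideals: for each `g`, an order ideal `D g` and an
order isomorphism `act g : D g⁻¹ → D g` (encoded as a total function whose
relevant values are those on `D g⁻¹`). -/
structure PartialAction (G L : Type*) [Group G] [SemilatticeInf L] where
  /-- The domain ideals. -/
  D : G → Set L
  /-- The partial translations (as total functions). -/
  act : G → L → L
  /-- Each `D g` is an order ideal. -/
  ideal : ∀ g : G, ∀ x y : L, x ≤ y → y ∈ D g → x ∈ D g
  /-- `act g` maps `D g⁻¹` into `D g`. -/
  mem_act : ∀ g : G, ∀ x ∈ D g⁻¹, act g x ∈ D g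
  /-- `act g` is an order embedding on `D g⁻¹`. -/
  act_le_iff : ∀ g : G, ∀ x ∈ D g⁻¹, ∀ y ∈ D g⁻¹, (act g x ≤ act g y ↔ x ≤ y)
  /-- `act g` maps `D g⁻¹` onto `D g`. -/
  act_surj : ∀ g : G, ∀ z ∈ D g, ∃ x ∈ D g⁻¹, act g x = z
  /-- `D 1 = L`. -/
  D_one : D 1 = Set.univ
  /-- `act 1 = id`. -/
  act_one : ∀ x : L, act 1 x = x
  /-- `act g⁻¹` inverts `act g`. -/
  act_inv : ∀ g : G, ∀ x ∈ D g⁻¹, act g⁻¹ (act g x) = x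
  /-- Compatibility with composition. -/
  act_comp : ∀ g h : G, ∀ x ∈ D h⁻¹, act h x ∈ D g⁻¹ →
    x ∈ D (g * h)⁻¹ ∧ act (g * h) x = act g (act h x)

namespace PartialAction

variable {G L : Type*} [Group G] [SemilatticeInf L]

/-- The carrier of the partial action product `L ⋊ G`. -/
def carrier (P : PartialAction G L) : Set (L × G) := {p | p.1 ∈ P.D p.2}

/-- Multiplication of `L ⋊ G`: `(e,g)(f,h) = (φ_g(φ_{g⁻¹}(e) ⊓ f), gh)`. -/
def mul (P : PartialAction G L) (p q : L × G) : L × G :=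
  (P.act p.2 (P.act p.2⁻¹ p.1 ⊓ q.1), p.2 * q.2)

/-- Inversion of `L ⋊ G`: `(e,g)⁻¹ = (φ_{g⁻¹}(e), g⁻¹)`. -/
def inv (P : PartialAction G L) (p : L × G) : L × G := (P.act p.2⁻¹ p.1, p.2⁻¹)

/-- The natural partial order of `L ⋊ G`: `s ≤ t` iff `s = (s s⁻¹) t`. -/
def nle (P : PartialAction G L) (p q : L × G) : Prop :=
  p = P.mul (P.mul p (P.inv p)) q

/-- The minimum group congruence `σ` of `L ⋊ G`. -/
def sigma (P : PartialAction G L) (p q : L × G) : Prop :=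
  ∃ u ∈ P.carrier, P.nle u p ∧ P.nle u q

/-- A dual-closure operator `j` on `L` is `G`-invariant if `act g (j x) = j (act g x)`
whenever `x ∈ D g⁻¹` (in particular `j x ∈ D g⁻¹` then). -/
def GInvariant (P : PartialAction G L) (j : L → L) : Prop :=
  ∀ g : G, ∀ x ∈ P.D g⁻¹, j x ∈ P.D g⁻¹ ∧ P.act g (j x) = j (P.act g x)

end PartialAction

end FInvPaper

namespace FInvPaper

open PartialAction

/-!
Only the kernel of `j` matters. It is a congruence of `L` because `j (j x ⊓ z) = j (x ⊓ z)`, and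
invariance makes it compatible with the partial translations. Products and inverses in `L ⋊ G` are
built from meets and translations, and leave the group component to be computed in `G`, so any
invariant congruence of `L` lifts. Finally `(e, g)` and `(f, g)` have the common lower bound
`(e ⊓ f, g)`, so elements with the same group component are `σ`-related.
-/

namespace PartialAction

variable {G L : Type*} [Group G] [SemilatticeInf L]

section

variable (P : PartialAction G L) {g : G} {x : L} {p q : L × G}

theorem act_inv_mem (hx : x ∈ P.D g) : P.act g⁻¹ x ∈ P.D g⁻¹ :=
  P.mem_act g⁻¹ x (by rwa [inv_inv])

theorem act_act_inv (hx : x ∈ P.D g) : P.act g (P.act g⁻¹ x) = x := by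
  simpa only [inv_inv] using P.act_inv g⁻¹ x (by rwa [inv_inv])

theorem act_inv_inf_mem (hx : x ∈ P.D g) (y : L) : P.act g⁻¹ x ⊓ y ∈ P.D g⁻¹ :=
  P.ideal g⁻¹ _ _ inf_le_left (P.act_inv_mem hx)

theorem mul_inv_self (hp : p ∈ P.carrier) : P.mul p (P.inv p) = (p.1, 1) := by
  simp only [mul, inv, inf_idem, P.act_act_inv hp, mul_inv_cancel]

theorem mk_one_mul (x : L) (q : L × G) : P.mul (x, 1) q = (x ⊓ q.1, q.2) := by
  simp only [mul, inv_one, P.act_one, one_mul]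

theorem nle_iff (hp : p ∈ P.carrier) : P.nle p q ↔ p.1 ≤ q.1 ∧ p.2 = q.2 := by
  rw [nle, P.mul_inv_self hp, mk_one_mul, Prod.ext_iff, eq_comm, inf_eq_left]

theorem sigma_iff_snd_eq (hp : p ∈ P.carrier) : P.sigma p q ↔ p.2 = q.2 := by
  constructor
  · rintro ⟨u, hu, hup, huq⟩
    exact ((P.nle_iff hu).1 hup).2.symm.trans ((P.nle_iff hu).1 huq).2
  · intro h
    have hu : (p.1 ⊓ q.1, p.2) ∈ P.carrier := P.ideal p.2 _ _ inf_le_left hp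
    exact ⟨_, hu, (P.nle_iff hu).2 ⟨inf_le_left, rfl⟩, (P.nle_iff hu).2 ⟨inf_le_right, h⟩⟩

end

/-- A `G`-invariant congruence of the meet-semilattice `L`, the datum from which a congruence of
`L ⋊ G` contained in `σ` is built. Compatibility with the action is required only on the domains
of the partial translations. -/
structure IsInvariantCongruence (P : PartialAction G L) (r : Setoid L) : Prop where
  inf_right : ∀ {x y : L}, r x y → ∀ z : L, r (x ⊓ z) (y ⊓ z)
  act : ∀ {g : G} {x y : L}, x ∈ P.D g⁻¹ → y ∈ P.D g⁻¹ → r x y → r (P.act g x) (P.act g y)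

/-- The relation on `L ⋊ G` induced by an equivalence relation `r` on `L`; it is the paper's `ρ̃_j`
when `r` is the kernel of `j`. Like `mul` and `inv`, it is defined on all of `L × G`. -/
def rhoTilde (G : Type*) {L : Type*} (r : Setoid L) : Setoid (L × G) where
  r p q := p.2 = q.2 ∧ r p.1 q.1
  iseqv :=
    { refl := fun p => ⟨rfl, r.refl p.1⟩
      symm := fun h => ⟨h.1.symm, r.symm h.2⟩
      trans := fun h k => ⟨h.1.trans k.1, r.trans h.2 k.2⟩ }

namespace IsInvariantCongruence

variable {P : PartialAction G L} {r : Setoid L} {p q : L × G}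

theorem inf_left (hr : P.IsInvariantCongruence r) {x y : L} (h : r x y) (z : L) :
    r (z ⊓ x) (z ⊓ y) := by
  simpa only [inf_comm z] using hr.inf_right h z

theorem rhoTilde_inv (hr : P.IsInvariantCongruence r) (hp : p ∈ P.carrier) (hq : q ∈ P.carrier)
    (h : rhoTilde G r p q) : rhoTilde G r (P.inv p) (P.inv q) := by
  obtain ⟨e, g⟩ := p
  obtain ⟨f, _⟩ := q
  obtain ⟨rfl, hef⟩ := h
  exact ⟨rfl, hr.act (by rwa [inv_inv]) (by rwa [inv_inv]) hef⟩

theorem rhoTilde_mul_right (hr : P.IsInvariantCongruence r) (hp : p ∈ P.carrier)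
    (hq : q ∈ P.carrier) (h : rhoTilde G r p q) (s : L × G) :
    rhoTilde G r (P.mul p s) (P.mul q s) := by
  have hinv : r (P.inv p).1 (P.inv q).1 := (hr.rhoTilde_inv hp hq h).2
  obtain ⟨e, g⟩ := p
  obtain ⟨f, _⟩ := q
  obtain ⟨rfl, -⟩ := h
  exact ⟨rfl, hr.act (P.act_inv_inf_mem hp s.1) (P.act_inv_inf_mem hq s.1)
    (hr.inf_right hinv s.1)⟩

theorem rhoTilde_mul_left (hr : P.IsInvariantCongruence r) {s : L × G} (hs : s ∈ P.carrier)
    (h : rhoTilde G r p q) : rhoTilde G r (P.mul s p) (P.mul s q) :=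
  ⟨congrArg (s.2 * ·) h.1,
    hr.act (P.act_inv_inf_mem hs p.1) (P.act_inv_inf_mem hs q.1) (hr.inf_left h.2 _)⟩

end IsInvariantCongruence

theorem dualClosure_inf_congr {j : L → L} (hj_le : ∀ x : L, j x ≤ x)
    (hj_mono : ∀ x y : L, x ≤ y → j x ≤ j y) (hj_idem : ∀ x : L, j (j x) = j x) {x y : L}
    (h : j x = j y) (z : L) : j (x ⊓ z) = j (y ⊓ z) := by
  let c : ClosureOperator Lᵒᵈ :=
    .mk' (OrderDual.toDual ∘ j ∘ OrderDual.ofDual) (fun x y hxy => hj_mono y x hxy) hj_le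
      (fun x => (hj_idem x).ge)
  have absorb (w : L) : j (j w ⊓ z) = j (w ⊓ z) := c.closure_sup_closure_left w z
  rw [← absorb x, h, absorb y]

theorem GInvariant.isInvariantCongruence_ker {P : PartialAction G L} {j : L → L}
    (hGinv : P.GInvariant j) (hj_le : ∀ x : L, j x ≤ x)
    (hj_mono : ∀ x y : L, x ≤ y → j x ≤ j y) (hj_idem : ∀ x : L, j (j x) = j x) :
    P.IsInvariantCongruence (Setoid.ker j) where
  inf_right h z := dualClosure_inf_congr hj_le hj_mono hj_idem h z
  act {g x y} hx hy h := calc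
    j (P.act g x) = P.act g (j x) := (hGinv g x hx).2.symm
    _ = P.act g (j y) := congrArg (P.act g) h
    _ = j (P.act g y) := (hGinv g y hy).2

end PartialAction

theorem rhoJtilde_congruence_general {G L : Type*} [Group G] [SemilatticeInf L]
    (P : PartialAction G L) {r : Setoid L} (hr : P.IsInvariantCongruence r) :
    Equivalence (rhoTilde G r) ∧
    (∀ p q s : L × G, p ∈ P.carrier → q ∈ P.carrier → s ∈ P.carrier → rhoTilde G r p q →
      rhoTilde G r (P.mul p s) (P.mul q s) ∧
      rhoTilde G r (P.mul s p) (P.mul s q) ∧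
      rhoTilde G r (P.inv p) (P.inv q)) ∧
    (∀ p q : L × G, p ∈ P.carrier → q ∈ P.carrier → rhoTilde G r p q → P.sigma p q) :=
  ⟨(rhoTilde G r).iseqv,
    fun _ _ s hp hq hs h =>
      ⟨hr.rhoTilde_mul_right hp hq h s, hr.rhoTilde_mul_left hs h, hr.rhoTilde_inv hp hq h⟩,
    fun _ _ hp _ h => (P.sigma_iff_snd_eq hp).2 h.1⟩

/-- Let a group `G` act partially on a meet-semilattice `L` by
order isomorphisms between order ideals, and let `j` be a `G`-invariant
dual-closure operator on `L`.  Then `ρ̃_j`, defined by `(e,g) ρ̃_j (f,h)` iff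
`g = h` and `j e = j f`, is a congruence of the inverse semigroup `L ⋊ G`
contained in the minimum group congruence `σ`. -/
theorem rhoJtilde_congruence {G L : Type*} [Group G] [SemilatticeInf L]
    (P : PartialAction G L) (j : L → L)
    (hj_le : ∀ x : L, j x ≤ x)
    (hj_mono : ∀ x y : L, x ≤ y → j x ≤ j y)
    (hj_idem : ∀ x : L, j (j x) = j x)
    (hGinv : P.GInvariant j) :
    -- `ρ̃_j` is an equivalence relation
    Equivalence (fun p q : L × G => p.2 = q.2 ∧ j p.1 = j q.1) ∧
    -- it is compatible with multiplication and inversion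
    (∀ p q r : L × G, p ∈ P.carrier → q ∈ P.carrier → r ∈ P.carrier →
      (p.2 = q.2 ∧ j p.1 = j q.1) →
      ((P.mul p r).2 = (P.mul q r).2 ∧ j (P.mul p r).1 = j (P.mul q r).1) ∧
      ((P.mul r p).2 = (P.mul r q).2 ∧ j (P.mul r p).1 = j (P.mul r q).1) ∧
      ((P.inv p).2 = (P.inv q).2 ∧ j (P.inv p).1 = j (P.inv q).1)) ∧
    -- it is contained in `σ`
    (∀ p q : L × G, p ∈ P.carrier → q ∈ P.carrier →
      (p.2 = q.2 ∧ j p.1 = j q.1) → P.sigma p q) :=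
  rhoJtilde_congruence_general P (hGinv.isInvariantCongruence_ker hj_le hj_mono hj_idem)

end FInvPaper
end

section
/- Let F be an inverse monoid and ψ : M(G,Y) → F a monoid homomorphism with ψ(s⁻¹) = ψ(s)⁻¹ for all s ∈ M(G,Y), and suppose that for every g ∈ G and every (A,g) ∈ M(G,Y) one has ψ(A,g) ≤ ψ(Γ_ḡ, g) in the natural partial order of F. Then ψ(A,g) = ψ(A^∧, g) for every (A,g) ∈ M(G,Y); consequently ψ factors through the map M(G,Y) → M^∧(G,Y), (A,g) ↦ (A^∧, g). -/
namespace FInvPaper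

/-!
Adding one edge `(a, \overline{a⁻¹b})` with endpoints in `A` does not change `ψ(A, g)`, and finitely
many such additions turn `A` into `A^∧`. For `s = (B, h)` one has
`s s⁻¹ (Γ_h̄, h) = (B ∪ Γ_h̄, h)`, so `ψ(s) ≤ ψ(Γ_h̄, h)` says precisely that
`ψ(B, h) = ψ(B ∪ Γ_h̄, h)`, which is the case of an edge from `1` to `h`. The general case is
transported from it, with `B = a⁻¹A` and `h = a⁻¹b`, by the factorization
`(A, a) (C, a⁻¹b) (b⁻¹A, b⁻¹g) = (A ∪ aC, g)`, used for `C = B` and for `C = B ∪ Γ_h̄`.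
-/

section Graph

variable {X G : Type*}

theorem gunion_self (A : Graph X G) : gunion A A = A := by
  simp only [gunion, Set.union_self]

theorem gunion_comm (A B : Graph X G) : gunion A B = gunion B A := by
  simp only [gunion, Set.union_comm]

theorem gunion_assoc (A B C : Graph X G) : gunion (gunion A B) C = gunion A (gunion B C) := by
  simp only [gunion, Set.union_assoc]

theorem gunion_gunion_self_left (A B : Graph X G) : gunion A (gunion A B) = gunion A B := by
  rw [← gunion_assoc, gunion_self]

variable [Group G]

theorem one_gmul (A : Graph X G) : gmul 1 A = A := by
  simp only [gmul, one_mul, Set.image_id', Prod.mk.eta]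

theorem gmul_gmul (g h : G) (A : Graph X G) : gmul g (gmul h A) = gmul (g * h) A := by
  simp only [gmul, Set.image_image, mul_assoc]

theorem gmul_gunion (g : G) (A B : Graph X G) :
    gmul g (gunion A B) = gunion (gmul g A) (gmul g B) := by
  simp only [gmul, gunion, Set.image_union]

theorem gmul_inv_cancel_left (g : G) (A : Graph X G) : gmul g (gmul g⁻¹ A) = A := by
  rw [gmul_gmul, mul_inv_cancel, one_gmul]

theorem gunion_gmul_gammaBar {A : Graph X G} {a b : G} (ha : a ∈ A.1) (hb : b ∈ A.1) :
    gunion A (gmul a (gammaBar (a⁻¹ * b))) =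
      (A.1, insert (a, Sum.inr (a⁻¹ * b)) A.2) := by
  simp only [gunion, gmul, gammaBar, Set.image_pair, Set.image_singleton, mul_one,
    mul_inv_cancel_left, Set.union_singleton, Set.union_eq_self_of_subset_right
      (Set.pair_subset ha hb)]

theorem clo_induction {P : Graph X G → Prop} {A : Graph X G} (hA : A.1.Finite) (base : P A)
    (step : ∀ B : Graph X G, ∀ a ∈ B.1, ∀ b ∈ B.1, P B →
      P (gunion B (gmul a (gammaBar (a⁻¹ * b))))) :
    P (clo A) := by
  have hfin : {e : G × YT X G | ∃ a ∈ A.1, ∃ b ∈ A.1, e = (a, Sum.inr (a⁻¹ * b))}.Finite := by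
    simpa only [Set.image2, eq_comm] using
      hA.image2 (fun a b => ((a, Sum.inr (a⁻¹ * b)) : G × YT X G)) hA
  refine Set.Finite.induction_on_subset (motive := fun S _ => P (A.1, A.2 ∪ S)) _ hfin
    (by rwa [Set.union_empty]) ?_
  rintro _ S ⟨a, ha, b, hb, rfl⟩ - - ih
  have hstep := step (A.1, A.2 ∪ S) a ha b hb ih
  rwa [gunion_gmul_gammaBar (A := (A.1, A.2 ∪ S)) ha hb, ← Set.union_insert] at hstep

end Graph

section Membership

variable {X G : Type*} [Group G] {ι : X → G} {A B : Graph X G} {a b : G}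

theorem eqvGen_edgeRel_mono (h : A.2 ⊆ B.2) (hab : Relation.EqvGen (edgeRel ι A) a b) :
    Relation.EqvGen (edgeRel ι B) a b :=
  hab.mono fun _ _ ⟨y, hy, hb⟩ => ⟨y, h hy, hb⟩

theorem eqvGen_edgeRel_gmul (g : G) (hab : Relation.EqvGen (edgeRel ι A) a b) :
    Relation.EqvGen (edgeRel ι (gmul g A)) (g * a) (g * b) := by
  induction hab with
  | rel u _ huv =>
    obtain ⟨y, hy, rfl⟩ := huv
    exact .rel _ _ ⟨y, ⟨(u, y), hy, rfl⟩, (mul_assoc ..).symm⟩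
  | refl => exact .refl _
  | symm _ _ _ ih => exact .symm _ _ ih
  | trans _ _ _ _ _ ih₁ ih₂ => exact .trans _ _ _ ih₁ ih₂

theorem endpoints_mem_gmul (hA : ∀ e ∈ A.2, e.1 ∈ A.1 ∧ e.1 * iotaY ι e.2 ∈ A.1) (g : G) :
    ∀ e ∈ (gmul g A).2, e.1 ∈ (gmul g A).1 ∧ e.1 * iotaY ι e.2 ∈ (gmul g A).1 := by
  rintro _ ⟨e, he, rfl⟩
  exact ⟨⟨_, (hA e he).1, rfl⟩, ⟨_, (hA e he).2, (mul_assoc ..).symm⟩⟩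

theorem gmul_inv_mem_XY (hA : A ∈ XY ι) (ha : a ∈ A.1) : gmul a⁻¹ A ∈ XY ι := by
  obtain ⟨⟨hV, hE, -, hends⟩, hconn⟩ := hA
  refine ⟨⟨hV.image _, hE.image _, ⟨a, ha, inv_mul_cancel a⟩, endpoints_mem_gmul hends _⟩, ?_⟩
  rintro _ ⟨v, hv, rfl⟩
  have hav : Relation.EqvGen (edgeRel ι A) a v := .trans _ _ _ (.symm _ _ (hconn a ha)) (hconn v hv)
  simpa only [inv_mul_cancel] using eqvGen_edgeRel_gmul a⁻¹ hav

theorem gunion_gmul_mem_XY (hA : A ∈ XY ι) (hB : B ∈ XY ι) (ha : a ∈ A.1) :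
    gunion A (gmul a B) ∈ XY ι := by
  obtain ⟨⟨hVA, hEA, hone, hendsA⟩, hconnA⟩ := hA
  obtain ⟨⟨hVB, hEB, -, hendsB⟩, hconnB⟩ := hB
  refine ⟨⟨hVA.union (hVB.image _), hEA.union (hEB.image _), .inl hone, ?_⟩, ?_⟩
  · rintro e (he | he)
    · exact (hendsA e he).imp .inl .inl
    · exact (endpoints_mem_gmul hendsB a e he).imp .inr .inr
  · rintro v (hv | ⟨v, hv, rfl⟩)
    · exact eqvGen_edgeRel_mono Set.subset_union_left (hconnA v hv)
    · have hav : Relation.EqvGen (edgeRel ι (gmul a B)) a (a * v) := by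
        simpa only [mul_one] using eqvGen_edgeRel_gmul a (hconnB v hv)
      exact .trans _ _ _ (eqvGen_edgeRel_mono Set.subset_union_left (hconnA a ha))
        (eqvGen_edgeRel_mono Set.subset_union_right hav)

theorem gammaBar_mem_XY (ι : X → G) (g : G) : gammaBar g ∈ XY ι := by
  refine ⟨⟨Set.toFinite {1, g}, Set.finite_singleton _, .inl rfl, ?_⟩, ?_⟩
  · rintro _ rfl
    exact ⟨.inl rfl, .inr (one_mul g)⟩
  · rintro v (rfl | rfl)
    · exact .refl _
    · exact .rel _ _ ⟨.inr v, rfl, (one_mul v).symm⟩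

theorem mk_gammaBar_mem_Mset (ι : X → G) (g : G) : ((gammaBar g, g) : Elt X G) ∈ Mset ι :=
  ⟨gammaBar_mem_XY ι g, .inr rfl⟩

theorem mulM_mem_Mset {p q : Elt X G} (hp : p ∈ Mset ι) (hq : q ∈ Mset ι) : mulM p q ∈ Mset ι :=
  ⟨gunion_gmul_mem_XY hp.1 hq.1 hp.2, .inr ⟨_, hq.2, rfl⟩⟩

theorem mk_gmul_inv_mem_Mset (hA : A ∈ XY ι) (ha : a ∈ A.1) (hb : b ∈ A.1) :
    ((gmul a⁻¹ A, a⁻¹ * b) : Elt X G) ∈ Mset ι :=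
  ⟨gmul_inv_mem_XY hA ha, b, hb, rfl⟩

theorem invM_mem_Mset {p : Elt X G} (hp : p ∈ Mset ι) : invM p ∈ Mset ι := by
  have hone : (1 : G) ∈ p.1.1 := hp.1.1.2.2.1
  simpa only [invM, mul_one] using mk_gmul_inv_mem_Mset hp.1 hp.2 hone

end Membership

section Multiplication

variable {X G : Type*} [Group G]

theorem mulM_invM_self_mulM (p q : Elt X G) :
    mulM (mulM p (invM p)) q = (gunion p.1 q.1, q.2) := by
  simp only [mulM, invM, gmul_inv_cancel_left, gunion_self, mul_inv_cancel, one_gmul, one_mul]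

theorem mulM_mulM_gmul_inv (A C : Graph X G) (a b g : G) :
    mulM (mulM (A, a) (C, a⁻¹ * b)) (gmul b⁻¹ A, b⁻¹ * g) = (gunion A (gmul a C), g) := by
  simp only [mulM, mul_inv_cancel_left, gmul_inv_cancel_left]
  rw [gunion_comm, gunion_gunion_self_left]

end Multiplication

section Homomorphism

variable {X G F : Type*} [Group G] [Mul F] {ι : X → G} {ψ : Elt X G → F}
  {A C D : Graph X G} {a b g : G}

theorem map_gunion_gmul_congr
    (hmul : ∀ p q : Elt X G, p ∈ Mset ι → q ∈ Mset ι → ψ (mulM p q) = ψ p * ψ q)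
    (hA : (A, g) ∈ Mset ι) (ha : a ∈ A.1) (hb : b ∈ A.1)
    (hC : (C, a⁻¹ * b) ∈ Mset ι) (hD : (D, a⁻¹ * b) ∈ Mset ι)
    (hCD : ψ (C, a⁻¹ * b) = ψ (D, a⁻¹ * b)) :
    ψ (gunion A (gmul a C), g) = ψ (gunion A (gmul a D), g) := by
  have hAa : (A, a) ∈ Mset ι := ⟨hA.1, ha⟩
  have hAb := mk_gmul_inv_mem_Mset hA.1 hb hA.2
  rw [← mulM_mulM_gmul_inv A C a b g, ← mulM_mulM_gmul_inv A D a b g,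
    hmul _ _ (mulM_mem_Mset hAa hC) hAb, hmul _ _ (mulM_mem_Mset hAa hD) hAb,
    hmul _ _ hAa hC, hmul _ _ hAa hD, hCD]

variable [Inv F]

theorem map_eq_map_gunion_gammaBar
    (hmul : ∀ p q : Elt X G, p ∈ Mset ι → q ∈ Mset ι → ψ (mulM p q) = ψ p * ψ q)
    (hinv : ∀ p : Elt X G, p ∈ Mset ι → ψ (invM p) = (ψ p)⁻¹)
    (hle : ∀ p : Elt X G, p ∈ Mset ι → ψ p = ψ p * (ψ p)⁻¹ * ψ (gammaBar p.2, p.2))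
    {p : Elt X G} (hp : p ∈ Mset ι) :
    ψ p = ψ (gunion p.1 (gammaBar p.2), p.2) :=
  calc
    ψ p = ψ p * (ψ p)⁻¹ * ψ (gammaBar p.2, p.2) := hle p hp
    _ = ψ (mulM (mulM p (invM p)) (gammaBar p.2, p.2)) := by
      rw [hmul _ _ (mulM_mem_Mset hp (invM_mem_Mset hp)) (mk_gammaBar_mem_Mset ι p.2),
        hmul _ _ hp (invM_mem_Mset hp), hinv _ hp]
    _ = ψ (gunion p.1 (gammaBar p.2), p.2) := by rw [mulM_invM_self_mulM]

theorem map_eq_map_gunion_gmul_gammaBar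
    (hmul : ∀ p q : Elt X G, p ∈ Mset ι → q ∈ Mset ι → ψ (mulM p q) = ψ p * ψ q)
    (hinv : ∀ p : Elt X G, p ∈ Mset ι → ψ (invM p) = (ψ p)⁻¹)
    (hle : ∀ p : Elt X G, p ∈ Mset ι → ψ p = ψ p * (ψ p)⁻¹ * ψ (gammaBar p.2, p.2))
    (hA : (A, g) ∈ Mset ι) (ha : a ∈ A.1) (hb : b ∈ A.1) :
    ψ (A, g) = ψ (gunion A (gmul a (gammaBar (a⁻¹ * b))), g) := by
  have hB := mk_gmul_inv_mem_Mset hA.1 ha hb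
  have hBΓ : (gunion (gmul a⁻¹ A) (gammaBar (a⁻¹ * b)), a⁻¹ * b) ∈ Mset ι := by
    simpa only [mulM_invM_self_mulM] using
      mulM_mem_Mset (mulM_mem_Mset hB (invM_mem_Mset hB)) (mk_gammaBar_mem_Mset ι (a⁻¹ * b))
  have h := map_gunion_gmul_congr hmul hA ha hb hB hBΓ
    (map_eq_map_gunion_gammaBar hmul hinv hle hB)
  rwa [gmul_gunion, gmul_inv_cancel_left, gunion_self, gunion_gunion_self_left] at h

end Homomorphism

theorem psi_factors_through_Mwedge_general {X G F : Type*} [Group G] [Mul F] [Inv F]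
    (ι : X → G) (ψ : Elt X G → F)
    (hmul : ∀ p q : Elt X G, p ∈ Mset ι → q ∈ Mset ι → ψ (mulM p q) = ψ p * ψ q)
    (hinv : ∀ p : Elt X G, p ∈ Mset ι → ψ (invM p) = (ψ p)⁻¹)
    (hle : ∀ p : Elt X G, p ∈ Mset ι → ψ p = ψ p * (ψ p)⁻¹ * ψ (gammaBar p.2, p.2)) :
    (∀ p : Elt X G, p ∈ Mset ι → ψ p = ψ (clo p.1, p.2)) ∧
    ∃ φ : Elt X G → F, ∀ p : Elt X G, p ∈ Mset ι → ψ p = φ (clo p.1, p.2) := by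
  suffices main : ∀ p : Elt X G, p ∈ Mset ι → ψ p = ψ (clo p.1, p.2) from ⟨main, ψ, main⟩
  rintro ⟨A, g⟩ hA
  have hclo : (clo A, g) ∈ Mset ι ∧ ψ (A, g) = ψ (clo A, g) := by
    refine clo_induction (P := fun B => (B, g) ∈ Mset ι ∧ ψ (A, g) = ψ (B, g)) hA.1.1.1
      ⟨hA, rfl⟩ ?_
    rintro B a ha b hb ⟨hB, hAB⟩
    exact ⟨⟨gunion_gmul_mem_XY hB.1 (gammaBar_mem_XY ι _) ha, .inl hB.2⟩,
      hAB.trans (map_eq_map_gunion_gmul_gammaBar hmul hinv hle hB ha hb)⟩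
  exact hclo.2

/-- Let `F` be an inverse monoid and `ψ : M(G,Y) → F` a
monoid homomorphism preserving inversion, and suppose that
`ψ(A,g) ≤ ψ(Γ_ḡ, g)` in the natural partial order of `F` for every
`(A,g) ∈ M(G,Y)`.  Then `ψ(A,g) = ψ(A^∧, g)` for every `(A,g) ∈ M(G,Y)`;
consequently `ψ` factors through `M(G,Y) → M^∧(G,Y)`, `(A,g) ↦ (A^∧, g)`. -/
theorem psi_factors_through_Mwedge {X G F : Type*} [Nonempty X] [Group G]
    [InverseMonoid F] (ι : X → G)
    (hgen : Subgroup.closure (Set.range ι) = ⊤)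
    (ψ : Elt X G → F)
    (hone : ψ ((gammaOne, 1) : Elt X G) = 1)
    (hmul : ∀ p q : Elt X G, p ∈ Mset ι → q ∈ Mset ι →
      ψ (mulM p q) = ψ p * ψ q)
    (hinv : ∀ p : Elt X G, p ∈ Mset ι → ψ (invM p) = (ψ p)⁻¹)
    (hle : ∀ p : Elt X G, p ∈ Mset ι →
      nle (ψ p) (ψ ((gammaBar p.2, p.2) : Elt X G))) :
    (∀ p : Elt X G, p ∈ Mset ι → ψ p = ψ ((clo p.1, p.2) : Elt X G)) ∧
    ∃ φ : Elt X G → F, ∀ p : Elt X G, p ∈ Mset ι →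
      ψ p = φ ((clo p.1, p.2) : Elt X G) :=
  psi_factors_through_Mwedge_general ι ψ hmul hinv hle

end FInvPaper
end
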